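/- Suppose μ ≥ 0 and z : [p₀,0] → ℝ is C¹ with z(p₀) = 0, z′(p₀) = 1, and p ↦ b(p)³z′(p) is differentiable on (p₀,0) with derivative μ·b·z. Then z(p) > 0 and z′(p) > 0 for every p ∈ (p₀,0]. -/

import Mathlib

open Set

/-!
The flux `u = b³z′` and `z` reinforce each other: `z` increases while `u > 0`, and `u` does not
decrease while `z > 0`. As long as `u` has been positive, it is therefore at least its initial
value, which is positive, so `u` has no first zero.
-/

theorem forall_mem_Icc_lt_of_forall_Ico_lt {α β : Type*} [LinearOrder α] [TopologicalSpace α]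
    [OrderClosedTopology α] [CompactIccSpace α] [LinearOrder β] [TopologicalSpace β]
    [ClosedIicTopology β] {a b : α} {f : α → β} {c : β} (hf : ContinuousOn f (Icc a b))
    (hstep : ∀ x ∈ Icc a b, (∀ y ∈ Ico a x, c < f y) → c < f x) :
    ∀ x ∈ Icc a b, c < f x := by
  by_contra! ⟨x, hx, hfx⟩
  have hcompact : IsCompact (Icc a b ∩ f ⁻¹' Iic c) :=
    isCompact_Icc.of_isClosed_subset (hf.preimage_isClosed_of_isClosed isClosed_Icc isClosed_Iic)
      inter_subset_left
  obtain ⟨m, ⟨hm, hfm⟩, hleast⟩ := hcompact.exists_isLeast ⟨x, hx, hfx⟩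
  refine (hstep m hm fun y hy ↦ ?_).not_ge hfm
  by_contra! hfy
  exact hy.2.not_ge (hleast ⟨⟨hy.1, hy.2.le.trans hm.2⟩, hfy⟩)

/-- Positive feedback between two functions on `[a, b]`: `z` increases where `u` is positive, and
`u` does not decrease where `z` is positive. It captures the sign structure of the first-order
system `z′ = u / w`, `u′ = q z` with `w > 0` and `q ≥ 0`. The functions `z'` and `u'` are the
derivatives of `z` and `u` on the open interval; their values at the endpoints are arbitrary. -/
structure IsPositiveFeedbackOn (z u z' u' : ℝ → ℝ) (a b : ℝ) : Prop where
  continuousOn_fst : ContinuousOn z (Icc a b)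
  continuousOn_snd : ContinuousOn u (Icc a b)
  hasDerivAt_fst : ∀ x ∈ Ioo a b, HasDerivAt z (z' x) x
  hasDerivAt_snd : ∀ x ∈ Ioo a b, HasDerivAt u (u' x) x
  deriv_fst_pos : ∀ x ∈ Ioo a b, 0 < u x → 0 < z' x
  deriv_snd_nonneg : ∀ x ∈ Ioo a b, 0 < z x → 0 ≤ u' x

namespace IsPositiveFeedbackOn

variable {z u z' u' : ℝ → ℝ} {a b c : ℝ}

theorem mono_right (h : IsPositiveFeedbackOn z u z' u' a b) (hcb : c ≤ b) :
    IsPositiveFeedbackOn z u z' u' a c where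
  continuousOn_fst := h.continuousOn_fst.mono (Icc_subset_Icc_right hcb)
  continuousOn_snd := h.continuousOn_snd.mono (Icc_subset_Icc_right hcb)
  hasDerivAt_fst x hx := h.hasDerivAt_fst x (Ioo_subset_Ioo_right hcb hx)
  hasDerivAt_snd x hx := h.hasDerivAt_snd x (Ioo_subset_Ioo_right hcb hx)
  deriv_fst_pos x hx := h.deriv_fst_pos x (Ioo_subset_Ioo_right hcb hx)
  deriv_snd_nonneg x hx := h.deriv_snd_nonneg x (Ioo_subset_Ioo_right hcb hx)

theorem strictMonoOn_fst (h : IsPositiveFeedbackOn z u z' u' a b)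
    (hu : ∀ x ∈ Ioo a b, 0 < u x) : StrictMonoOn z (Icc a b) := by
  apply strictMonoOn_of_hasDerivWithinAt_pos (f' := z') (convex_Icc a b) h.continuousOn_fst <;>
    rw [interior_Icc]
  · exact fun x hx ↦ (h.hasDerivAt_fst x hx).hasDerivWithinAt
  · exact fun x hx ↦ h.deriv_fst_pos x hx (hu x hx)

theorem fst_pos_of_snd_pos (h : IsPositiveFeedbackOn z u z' u' a b) (hza : 0 ≤ z a)
    (hu : ∀ x ∈ Ioo a b, 0 < u x) {x : ℝ} (hx : x ∈ Ioc a b) : 0 < z x :=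
  hza.trans_lt <| h.strictMonoOn_fst hu (left_mem_Icc.2 (hx.1.le.trans hx.2))
    (Ioc_subset_Icc_self hx) hx.1

theorem monotoneOn_snd (h : IsPositiveFeedbackOn z u z' u' a b) (hza : 0 ≤ z a)
    (hu : ∀ x ∈ Ioo a b, 0 < u x) : MonotoneOn u (Icc a b) := by
  apply monotoneOn_of_hasDerivWithinAt_nonneg (f' := u') (convex_Icc a b) h.continuousOn_snd <;>
    rw [interior_Icc]
  · exact fun x hx ↦ (h.hasDerivAt_snd x hx).hasDerivWithinAt
  · exact fun x hx ↦ h.deriv_snd_nonneg x hx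
      (h.fst_pos_of_snd_pos hza hu (Ioo_subset_Ioc_self hx))

theorem snd_pos (h : IsPositiveFeedbackOn z u z' u' a b) (hza : 0 ≤ z a) (hua : 0 < u a) :
    ∀ x ∈ Icc a b, 0 < u x := by
  refine forall_mem_Icc_lt_of_forall_Ico_lt h.continuousOn_snd fun x hx hpos ↦ ?_
  have hmono : MonotoneOn u (Icc a x) :=
    (h.mono_right hx.2).monotoneOn_snd hza fun y hy ↦ hpos y (Ioo_subset_Ico_self hy)
  exact hua.trans_le (hmono (left_mem_Icc.2 hx.1) (right_mem_Icc.2 hx.1) hx.1)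

theorem fst_pos (h : IsPositiveFeedbackOn z u z' u' a b) (hza : 0 ≤ z a) (hua : 0 < u a) :
    ∀ x ∈ Ioc a b, 0 < z x := fun _ hx ↦
  h.fst_pos_of_snd_pos hza (fun y hy ↦ h.snd_pos hza hua y (Ioo_subset_Icc_self hy)) hx

end IsPositiveFeedbackOn

theorem isPositiveFeedbackOn_of_sturmLiouville {a b : ℝ} {w q z z' : ℝ → ℝ}
    (hwpos : ∀ x ∈ Ioo a b, 0 < w x) (hq : ∀ x ∈ Ioo a b, 0 ≤ q x)
    (hzc : ContinuousOn z (Icc a b)) (hz : ∀ x ∈ Ioo a b, HasDerivAt z (z' x) x)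
    (hflux : ContinuousOn (fun s ↦ w s * z' s) (Icc a b))
    (hode : ∀ x ∈ Ioo a b, HasDerivAt (fun s ↦ w s * z' s) (q x * z x) x) :
    IsPositiveFeedbackOn z (fun s ↦ w s * z' s) z' (fun s ↦ q s * z s) a b where
  continuousOn_fst := hzc
  continuousOn_snd := hflux
  hasDerivAt_fst := hz
  hasDerivAt_snd := hode
  deriv_fst_pos x hx hflux_x := pos_of_mul_pos_right hflux_x (hwpos x hx).le
  deriv_snd_nonneg x hx hzx := mul_nonneg (hq x hx) hzx.le

theorem stmt_6_general {a b : ℝ} {w q z z' : ℝ → ℝ}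
    (hwpos : ∀ x ∈ Icc a b, 0 < w x) (hq : ∀ x ∈ Ioo a b, 0 ≤ q x)
    (hz : ∀ x ∈ Icc a b, HasDerivWithinAt z (z' x) (Icc a b) x)
    (hflux : ContinuousOn (fun s ↦ w s * z' s) (Icc a b))
    (hza : 0 ≤ z a) (hz'a : 0 < z' a)
    (hode : ∀ x ∈ Ioo a b, HasDerivAt (fun s ↦ w s * z' s) (q x * z x) x) :
    ∀ x ∈ Ioc a b, 0 < z x ∧ 0 < z' x := by
  intro x hx
  have hfeedback : IsPositiveFeedbackOn z (fun s ↦ w s * z' s) z' (fun s ↦ q s * z s) a b :=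
    isPositiveFeedbackOn_of_sturmLiouville (fun y hy ↦ hwpos y (Ioo_subset_Icc_self hy)) hq
      (HasDerivWithinAt.continuousOn hz)
      (fun y hy ↦ (hz y (Ioo_subset_Icc_self hy)).hasDerivAt (Icc_mem_nhds hy.1 hy.2)) hflux hode
  have hflux_a : 0 < w a * z' a := mul_pos (hwpos a (left_mem_Icc.2 (hx.1.le.trans hx.2))) hz'a
  have hflux_x : 0 < w x * z' x := hfeedback.snd_pos hza hflux_a x (Ioc_subset_Icc_self hx)
  exact ⟨hfeedback.fst_pos hza hflux_a x hx,
    pos_of_mul_pos_right hflux_x (hwpos x (Ioc_subset_Icc_self hx)).le⟩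

/-- For `μ ≥ 0`, the solution `z` of `(b³z′)′ = μ b z` with `z(p₀)=0, z′(p₀)=1`
satisfies `z > 0` and `z′ > 0` on `(p₀,0]`. -/
theorem stmt_6 (p₀ μ : ℝ) (hp₀ : p₀ < 0) (hμ : 0 ≤ μ)
    (b : ℝ → ℝ) (hb : ContinuousOn b (Set.Icc p₀ 0)) (hbpos : ∀ p ∈ Set.Icc p₀ 0, 0 < b p)
    (z z' : ℝ → ℝ)
    (hz : ∀ p ∈ Set.Icc p₀ 0, HasDerivWithinAt z (z' p) (Set.Icc p₀ 0) p)
    (hzc : ContinuousOn z' (Set.Icc p₀ 0))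
    (hz0 : z p₀ = 0) (hz1 : z' p₀ = 1)
    (hzode : ∀ p ∈ Set.Ioo p₀ 0,
      HasDerivAt (fun s => b s ^ 3 * z' s) (μ * b p * z p) p) :
    ∀ p ∈ Set.Ioc p₀ (0 : ℝ), 0 < z p ∧ 0 < z' p :=
  stmt_6_general (fun p hp ↦ pow_pos (hbpos p hp) 3)
    (fun p hp ↦ mul_nonneg hμ (hbpos p (Ioo_subset_Icc_self hp)).le)
    hz ((hb.pow 3).mul hzc) hz0.ge (hz1 ▸ one_pos) hzode
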